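/- Let C be a simplicial set such that for all n ≥ 2 and all 0 < i < n, every map Λ[n,i] → C from the inner horn extends uniquely to a map Δ[n] → C. Then C is isomorphic, as a simplicial set, to the nerve of a small category. -/

import Mathlib

open CategoryTheory Simplicial

namespace UniqueHorn

open SSet Opposite

/-- The unique inner horn filling condition. -/
def UFill (C : SSet.{0}) : Prop :=
  ∀ ⦃n : ℕ⦄ ⦃i : Fin (n + 1)⦄, 0 < i → i < Fin.last n →
      ∀ σ₀ : (Λ[n, i] : SSet) ⟶ C, ∃! σ : (Δ[n] : SSet) ⟶ C,
        σ₀ = Λ[n, i].ι ≫ σ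

variable {C : SSet.{0}}

lemma UFill.ext (hC : UFill C) {n : ℕ} {i : Fin (n + 2)} (h0 : 0 < i) (h1 : i < Fin.last (n + 1))
    {x y : C _⦋n + 1⦌} (h : ∀ j, j ≠ i → C.δ j x = C.δ j y) : x = y := by
  apply yonedaEquiv.symm.injective
  refine (hC h0 h1 (Λ[n + 1, i].ι ≫ yonedaEquiv.symm x)).unique rfl ?_
  apply horn.hom_ext'
  intro j hj
  rw [horn.ι_ι_assoc, horn.ι_ι_assoc, stdSimplex.δ_comp_yonedaEquiv_symm,
    stdSimplex.δ_comp_yonedaEquiv_symm, h j hj]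

lemma UFill.fill (hC : UFill C) {n : ℕ} {i : Fin (n + 3)} (h0 : 0 < i)
    (h1 : i < Fin.last (n + 2)) (x : ∀ j : Fin (n + 3), j ≠ i → C _⦋n + 1⦌)
    (hx : ∀ (j k : Fin (n + 3)) (hj : j ≠ i) (hk : k ≠ i) (hjk : j < k),
      C.δ (k.pred (Fin.ne_zero_of_lt hjk)) (x j hj) =
        C.δ (j.castPred (Fin.ne_last_of_lt hjk)) (x k hk)) :
    ∃ s : C _⦋n + 2⦌, ∀ j hj, C.δ j s = x j hj := by
  have hf : horn.IsCompatible (fun j hj ↦ yonedaEquiv.symm (x j hj)) := by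
    rw [horn.isCompatible_iff]
    intro j k hj hk hjk
    rw [stdSimplex.δ_comp_yonedaEquiv_symm, stdSimplex.δ_comp_yonedaEquiv_symm, hx j k hj hk hjk]
  obtain ⟨σ, hσ, -⟩ := hC h0 h1 hf.desc
  refine ⟨yonedaEquiv σ, fun j hj ↦ ?_⟩
  have := hf.ι_desc j hj
  rw [hσ, horn.ι_ι_assoc] at this
  rw [← stdSimplex.yonedaEquiv_δ_comp, this, Equiv.apply_symm_apply]

lemma UFill.exists_comp (hC : UFill C) {x y z : C _⦋0⦌} (f : Edge x y) (g : Edge y z) :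
    ∃ h : Edge x z, Nonempty (Edge.CompStruct f g h) := by
  obtain ⟨s, hs⟩ := hC.fill (n := 0) (i := 1) (by decide) (by decide)
    (fun j _ ↦ if j = 0 then g.edge else f.edge) (by
      intro j k hj hk hjk
      obtain ⟨rfl, rfl⟩ : j = 0 ∧ k = 2 := by
        revert j k; decide
      exact g.src_eq.trans f.tgt_eq.symm)
  have h0 : C.δ 0 s = g.edge := by simpa using hs 0 (by decide)
  have h2 : C.δ 2 s = f.edge := by simpa using hs 2 (by decide)
  refine ⟨Edge.mk (C.δ 1 s) ?_ ?_, ⟨Edge.CompStruct.mk s h2 h0 rfl⟩⟩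
  · have := C.δ_comp_δ_apply (n := 0) (i := 1) (j := 1) le_rfl s
    rw [← f.src_eq, ← h2]
    exact this.symm
  · have := C.δ_comp_δ_apply (n := 0) (i := 0) (j := 0) le_rfl s
    rw [← g.tgt_eq, ← h0]
    exact this

lemma UFill.comp_unique (hC : UFill C) {x y z : C _⦋0⦌} {f : Edge x y} {g : Edge y z}
    {h h' : Edge x z} (s : Edge.CompStruct f g h) (s' : Edge.CompStruct f g h') : h = h' := by
  have : s.simplex = s'.simplex := by
    refine hC.ext (i := 1) (by decide) (by decide) fun j hj ↦ ?_
    obtain rfl | rfl : j = 0 ∨ j = 2 := by revert j; decide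
    · rw [s.d₀, s'.d₀]
    · rw [s.d₂, s'.d₂]
  ext
  rw [← s.d₁, this, s'.d₁]

lemma UFill.assoc (hC : UFill C) {x y z w : C _⦋0⦌} {f : Edge x y} {g : Edge y z} {h : Edge z w}
    {fg : Edge x z} {gh : Edge y w} {k : Edge x w} (s : Edge.CompStruct f g fg)
    (t : Edge.CompStruct g h gh) (u : Edge.CompStruct f gh k) :
    Nonempty (Edge.CompStruct fg h k) := by
  obtain ⟨v, hv⟩ := hC.fill (n := 1) (i := 1) (by decide) (by decide)
    (fun j _ ↦ if j = 0 then t.simplex else if j = 2 then u.simplex else s.simplex) (by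
      intro j k hj hk hjk
      obtain ⟨rfl, rfl⟩ | ⟨rfl, rfl⟩ | ⟨rfl, rfl⟩ :
        (j = 0 ∧ k = 2) ∨ (j = 0 ∧ k = 3) ∨ (j = 2 ∧ k = 3) := by revert j k; decide
      · exact t.d₁.trans u.d₀.symm
      · exact t.d₂.trans s.d₀.symm
      · exact u.d₂.trans s.d₂.symm)
  have h0 : C.δ 0 v = t.simplex := hv 0 (by decide)
  have h2 : C.δ 2 v = u.simplex := hv 2 (by decide)
  have h3 : C.δ 3 v = s.simplex := hv 3 (by decide)
  refine ⟨Edge.CompStruct.mk (C.δ 1 v) ?_ ?_ ?_⟩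
  · rw [← s.d₁, ← h3]
    exact (C.δ_comp_δ_apply (n := 1) (i := 1) (j := 2) (by decide) v).symm
  · rw [← t.d₀, ← h0]
    exact C.δ_comp_δ_apply (n := 1) (i := 0) (j := 0) (by decide) v
  · rw [← u.d₁, ← h2]
    exact (C.δ_comp_δ_apply (n := 1) (i := 1) (j := 1) (by decide) v).symm

/-- The category attached to `C`. -/
@[reducible]
noncomputable def UFill.cat (hC : UFill C) : SmallCategory (C _⦋0⦌) where
  Hom x y := Edge x y
  id x := Edge.id x
  comp f g := (hC.exists_comp f g).choose
  id_comp f := hC.comp_unique (hC.exists_comp _ _).choose_spec.some (.idComp f)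
  comp_id f := hC.comp_unique (hC.exists_comp _ _).choose_spec.some (.compId f)
  assoc f g h := hC.comp_unique (hC.exists_comp _ _).choose_spec.some
    (hC.assoc (hC.exists_comp _ _).choose_spec.some (hC.exists_comp _ _).choose_spec.some
      (hC.exists_comp _ _).choose_spec.some).some

lemma edge_heq {x y x' y' : C _⦋0⦌} (hx : x = x') (hy : y = y') {e : Edge x y} {e' : Edge x' y'}
    (h : e.edge = e'.edge) : HEq e e' := by
  subst hx hy
  exact heq_of_eq (Edge.ext h)

lemma edge_eq_of_heq {x y x' y' : C _⦋0⦌} (hx : x = x') (hy : y = y') {e : Edge x y}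
    {e' : Edge x' y'} (h : HEq e e') : e.edge = e'.edge := by
  subst hx hy
  rw [eq_of_heq h]

/-- The `i`-th vertex. -/
def vtx {n : ℕ} (x : C _⦋n⦌) (i : Fin (n + 1)) : C _⦋0⦌ :=
  C.map (SimplexCategory.const ⦋0⦌ ⦋n⦌ i).op x

/-- The edge from vertex `i` to vertex `j`. -/
def edg {n : ℕ} (x : C _⦋n⦌) (i j : Fin (n + 1)) (h : i ≤ j) : Edge (vtx x i) (vtx x j) :=
  Edge.mk (C.map (SimplexCategory.mkOfLe i j h).op x)
    (by
      rw [SimplicialObject.δ_def, ← Functor.map_comp_apply, ← op_comp]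
      congr 3
      apply Quiver.Hom.unop_inj
      ext a; fin_cases a; rfl)
    (by
      rw [SimplicialObject.δ_def, ← Functor.map_comp_apply, ← op_comp]
      congr 3
      apply Quiver.Hom.unop_inj
      ext a; fin_cases a; rfl)

lemma edg_self {n : ℕ} (x : C _⦋n⦌) (i : Fin (n + 1)) : edg x i i le_rfl = Edge.id _ := by
  ext
  change C.map (SimplexCategory.mkOfLe i i le_rfl).op x = C.σ 0 (vtx x i)
  simp only [vtx]
  rw [SimplicialObject.σ_def, ← Functor.map_comp_apply, ← op_comp]
  congr 3
  apply Quiver.Hom.unop_inj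
  ext a; fin_cases a <;> rfl

lemma edg_comp {n : ℕ} (x : C _⦋n⦌) (i j k : Fin (n + 1)) (h : i ≤ j) (h' : j ≤ k) :
    Nonempty (Edge.CompStruct (edg x i j h) (edg x j k h') (edg x i k (h.trans h'))) := by
  refine ⟨Edge.CompStruct.mk (C.map (SimplexCategory.mkOfLeComp i j k h h').op x) ?_ ?_ ?_⟩ <;>
  · simp only [edg, Edge.mk_edge]
    rw [SimplicialObject.δ_def, ← Functor.map_comp_apply, ← op_comp]
    congr 3
    apply Quiver.Hom.unop_inj
    ext a; fin_cases a <;> rfl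

/-- The functor attached to a simplex. -/
noncomputable def UFill.toFun (hC : UFill C) {n : ℕ} (x : C _⦋n⦌) :
    letI := hC.cat
    ComposableArrows (C _⦋0⦌) n :=
  letI := hC.cat
  { obj i := vtx x i
    map {i j} f := edg x i j (leOfHom f)
    map_id i := edg_self x i
    map_comp f g := hC.comp_unique (edg_comp x _ _ _ (leOfHom f) (leOfHom g)).some
      (hC.exists_comp _ _).choose_spec.some }

lemma vtx_map {n m : ℕ} (φ : ⦋m⦌ ⟶ ⦋n⦌) (x : C _⦋n⦌) (i : Fin (m + 1)) :
    vtx (C.map φ.op x) i = vtx x (φ.toOrderHom i) := by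
  simp only [vtx]
  rw [← Functor.map_comp_apply, ← op_comp]
  rfl

lemma edg_map {n m : ℕ} (φ : ⦋m⦌ ⟶ ⦋n⦌) (x : C _⦋n⦌) (i j : Fin (m + 1)) (h : i ≤ j) :
    (edg (C.map φ.op x) i j h).edge = 
      (edg x (φ.toOrderHom i) (φ.toOrderHom j) (φ.toOrderHom.monotone h)).edge := by
  simp only [edg, Edge.mk_edge]
  rw [← Functor.map_comp_apply, ← op_comp]
  congr 3
  apply Quiver.Hom.unop_inj
  ext a; fin_cases a <;> rfl

/-- The comparison map. -/
noncomputable def UFill.toNerve (hC : UFill C) :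
    letI := hC.cat
    C ⟶ nerve (C _⦋0⦌) :=
  letI := hC.cat
  { app n := ↾fun x ↦ hC.toFun (n := n.unop.len) x
    naturality := by
      intro n m φ
      ext x
      refine Functor.hext (fun i ↦ vtx_map φ.unop x i) (fun i j f ↦ ?_)
      exact edge_heq (vtx_map φ.unop x i) (vtx_map φ.unop x j) (edg_map φ.unop x i j (leOfHom f)) }

lemma nerve_ext {Z : Type} [SmallCategory Z] {n : ℕ} {i : Fin (n + 3)} (h0 : 0 < i)
    (h1 : i < Fin.last (n + 2))
    {x y : (nerve Z) _⦋n + 2⦌} (h : ∀ j, j ≠ i → (nerve Z).δ j x = (nerve Z).δ j y) : x = y := by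
  apply (IsStrictSegal.segal (X := nerve Z) (n + 2)).injective
  apply Path.ext'
  intro k
  simp only [spine_arrow]
  obtain rfl | ⟨k, rfl⟩ := k.eq_zero_or_eq_succ
  · have := SimplexCategory.mkOfSucc_δ_lt (n := n + 1) (i := 0) (j := Fin.last _) (by simp [Fin.lt_def])
    simp only [Fin.castSucc_zero] at this
    rw [← this, op_comp, Functor.map_comp_apply, Functor.map_comp_apply,
      ← SimplicialObject.δ_def, h _ h1.ne']
  · have := SimplexCategory.mkOfSucc_δ_gt (n := n + 1) (i := k) (j := 0) (by simp [Fin.lt_def])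
    rw [← this, op_comp, Functor.map_comp_apply, Functor.map_comp_apply,
      ← SimplicialObject.δ_def, h _ h0.ne]

lemma bij_step {Z : Type} [SmallCategory Z] (hC : UFill C) (F : C ⟶ nerve Z) (n : ℕ)
    (h0 : Function.Injective (F.app (op ⦋n⦌))) (h1 : Function.Bijective (F.app (op ⦋n + 1⦌))) :
    Function.Bijective (F.app (op ⦋n + 2⦌)) := by
  have nat : ∀ {m : ℕ} (j : Fin (m + 2)) (x : C _⦋m + 1⦌),
      F.app (op ⦋m⦌) (C.δ j x) = (nerve Z).δ j (F.app (op ⦋m + 1⦌) x) :=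
    fun j x ↦ NatTrans.naturality_apply F (SimplexCategory.δ j).op x
  have i0 : (0 : Fin (n + 3)) < 1 := by simp [Fin.lt_def]
  have i1 : (1 : Fin (n + 3)) < Fin.last (n + 2) := by simp [Fin.lt_def]
  constructor
  · intro x y hxy
    refine hC.ext i0 i1 fun j _ ↦ h1.1 ?_
    rw [nat, nat, hxy]
  · intro y
    choose g hg using h1.2
    obtain ⟨s, hs⟩ := hC.fill i0 i1 (fun j _ ↦ g ((nerve Z).δ j y)) (by
      intro j k hj hk hjk
      apply h0
      rw [nat, nat, hg, hg]
      obtain ⟨j, rfl⟩ := j.eq_castSucc_of_ne_last (Fin.ne_last_of_lt hjk)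
      obtain ⟨k, rfl⟩ := k.eq_succ_of_ne_zero (Fin.ne_zero_of_lt hjk)
      simp only [Fin.pred_succ, Fin.castPred_castSucc]
      have hle : j ≤ k := by
        simp only [Fin.lt_def, Fin.val_castSucc, Fin.val_succ] at hjk
        exact Fin.le_def.2 (by omega)
      exact ((nerve Z).δ_comp_δ_apply (n := n) (i := j) (j := k) hle y).symm)
    refine ⟨s, nerve_ext i0 i1 fun j hj ↦ ?_⟩
    rw [← nat, hs j hj, hg]

lemma vtx_zero (x : C _⦋0⦌) (i) : vtx x i = x := by
  have : SimplexCategory.const ⦋0⦌ ⦋0⦌ i = 𝟙 _ := by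
    ext a; fin_cases a; fin_cases i; rfl
  simp [vtx, this]

lemma edg_zero_one (x : C _⦋1⦌) : (edg x 0 1 (by simp)).edge = x := by
  have : SimplexCategory.mkOfLe (n := 1) 0 1 (by simp) = 𝟙 _ := by
    ext a; fin_cases a <;> rfl
  simp [edg, this]

lemma bij_zero (hC : UFill C) : Function.Bijective (hC.toNerve.app (op ⦋0⦌)) := by
  let := hC.cat
  constructor
  · intro x y h
    have : vtx x 0 = vtx y 0 := congrArg (fun G : ComposableArrows (C _⦋0⦌) 0 ↦ G.obj 0) h
    simpa only [vtx_zero] using this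
  · intro y
    exact ⟨ComposableArrows.obj' y 0, ComposableArrows.ext₀ (vtx_zero _ _)⟩

lemma bij_one (hC : UFill C) : Function.Bijective (hC.toNerve.app (op ⦋1⦌)) := by
  let := hC.cat
  constructor
  · intro x y h
    have : (edg x 0 1 (by simp)).edge = (edg y 0 1 (by simp)).edge :=
      congrArg (fun G : ComposableArrows (C _⦋0⦌) 1 ↦ Edge.edge (G.map' 0 1)) h
    simpa only [edg_zero_one] using this
  · intro y
    obtain ⟨a, b, f, rfl⟩ := ComposableArrows.mk₁_surjective y
    have key : ∀ (a b : C _⦋0⦌) (f : Edge a b), hC.toFun f.edge = ComposableArrows.mk₁ f := by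
      intro a b f
      have ha : vtx f.edge 0 = a := by
        rw [← (edg f.edge 0 1 (by simp)).src_eq, edg_zero_one, f.src_eq]
      have hb : vtx f.edge 1 = b := by
        rw [← (edg f.edge 0 1 (by simp)).tgt_eq, edg_zero_one, f.tgt_eq]
      refine ComposableArrows.ext₁ ha hb ?_
      refine (conj_eqToHom_iff_heq _ _ ha hb).2 ?_
      exact edge_heq ha hb (edg_zero_one _)
    exact ⟨Edge.edge f, key a b f⟩

lemma bij (hC : UFill C) (n : ℕ) : Function.Bijective (hC.toNerve.app (op ⦋n⦌)) ∧
    Function.Bijective (hC.toNerve.app (op ⦋n + 1⦌)) := by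
  induction n with
  | zero => exact ⟨bij_zero hC, bij_one hC⟩
  | succ n ih =>
    letI := hC.cat
    exact ⟨ih.2, bij_step hC _ n ih.1.1 ih.2⟩

end UniqueHorn

theorem unique_inner_horn_filling_iff_nerve
    (C : SSet.{0})
    (hC : ∀ ⦃n : ℕ⦄ ⦃i : Fin (n + 1)⦄, 0 < i → i < Fin.last n →
      ∀ σ₀ : (Λ[n, i] : SSet) ⟶ C, ∃! σ : (Δ[n] : SSet) ⟶ C,
        σ₀ = Λ[n, i].ι ≫ σ) :
    ∃ (Z : Type) (_ : SmallCategory Z), Nonempty (C ≅ nerve Z) := by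
  have hC' : UniqueHorn.UFill C := hC
  letI := hC'.cat
  refine ⟨C _⦋0⦌, hC'.cat, ⟨?_⟩⟩
  have : IsIso hC'.toNerve := by
    rw [NatTrans.isIso_iff_isIso_app]
    intro n
    rw [isIso_iff_bijective]
    exact (UniqueHorn.bij hC' n.unop.len).1
  exact asIso hC'.toNerve
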